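/- For any positive operator ρ on H supported on a finite set, there exists a positive operator ρ' on H supported on a finite set such that d_j(ρ') = 1/r for every j ∈ {1,…,r} and T(ρ', a) ≥ T(ρ, a) − 2r‖a‖ · Σ_{j=1}^r |d_j(ρ) − 1/r|. -/

import Mathlib

/-! A positive operator supported on `F` is a finite sum `ρ = ∑ |x_k⟩⟨x_k|` with each `x_k` supported
on `F` (`exists_eq_rkOp`, taking `x_k = √ρ e_k`). Put `c = 1/r`, `m_j = min (d_j, c)`, and let `D` be
multiplication by `s_j = √(m_j / d_j) ≤ 1` on the block `V_j`. Then `d_j(DρD) = m_j ≤ c`, and adding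
`(c - m_j) |e_w⟩⟨e_w|` for one chosen vertex `w ∈ V_j`, for every `j`, gives a feasible `ρ'`.

Expanding in blocks, `T(ρ, a) - T(DρD, a) = ∑_{i,j} (1 - s_i s_j) ∑_k Re ⟪I_i x_k, a I_j x_k⟫`, and
Cauchy–Schwarz over `k` bounds the inner sum by `‖a‖ √d_i √d_j` (`scale_loss`). Since
`s_j √d_j = √m_j`, each pair costs at most `‖a‖ (√d_i √d_j - √m_i √m_j)`, which is at most
`‖a‖ ((d_i - m_i) + (d_j - m_j)) / 2` (`sqrt_mul_sub_le`). The total is at most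
`r ‖a‖ ∑_j (d_j - m_j)`, and the added terms cost at most `‖a‖ ∑_j (c - m_j)`. Because
`(d_j - m_j) + (c - m_j) = |d_j - c|`, the loss is within the claimed bound. -/

open scoped ComplexInnerProductSpace ComplexOrder

noncomputable section

/-- The Hilbert space `ℓ²(V; ℂ)`. -/
abbrev Hs (V : Type) : Type := lp (fun _ : V => ℂ) 2

/-- The standard orthonormal basis vector `e_v` of `ℓ²(V; ℂ)`. -/
def bas (V : Type) (v : V) : Hs V :=
  letI := Classical.decEq V
  lp.single 2 v 1

/-- `d_j(ρ) = ∑_{v ∈ V_j} Re ⟪e_v, ρ e_v⟫` (only finitely many nonzero terms for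
finitely-supported `ρ`). -/
def dPart {V : Type} {r : ℕ} (g : V → Fin r) (ρ : Hs V →L[ℂ] Hs V) (j : Fin r) : ℝ :=
  ∑' v : V, if g v = j then (⟪bas V v, ρ (bas V v)⟫).re else 0

/-- `T(ρ, b) = ∑_{v ∈ V} Re ⟪e_v, ρ (b e_v)⟫`, the trace of `ρ b`. -/
def TT {V : Type} (ρ b : Hs V →L[ℂ] Hs V) : ℝ :=
  ∑' v : V, (⟪bas V v, ρ (b (bas V v))⟫).re

/-- `λ_max(b) = sup { Re ⟪x, b x⟫ : ‖x‖ = 1 }`. -/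
def lamMax {V : Type} (b : Hs V →L[ℂ] Hs V) : ℝ :=
  sSup {t : ℝ | ∃ x : Hs V, ‖x‖ = 1 ∧ t = (⟪x, b x⟫).re}

lemma bas_inner {V : Type} (v : V) (x : Hs V) : ⟪bas V v, x⟫ = x v := by
  classical
  unfold bas
  rw [lp.inner_single_left]
  simp

lemma inner_bas {V : Type} (v : V) (x : Hs V) : ⟪x, bas V v⟫ = star (x v) := by
  rw [← bas_inner, ← inner_conj_symm]; rfl

open Classical in
lemma bas_apply {V : Type} (v w : V) :
    (bas V v) w = if w = v then (1 : ℂ) else 0 := by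
  unfold bas
  rw [lp.single_apply, Pi.single_apply]

lemma Hs_smul_apply {V : Type} (c : ℂ) (x : Hs V) (v : V) : (c • x) v = c * x v := rfl

lemma Hs_sum_apply {V ι : Type} (S : Finset ι) (f : ι → Hs V) (v : V) :
    (∑ i ∈ S, f i) v = ∑ i ∈ S, f i v := by
  rw [lp.coeFn_sum, Finset.sum_apply]

lemma norm_bas {V : Type} (v : V) : ‖bas V v‖ = 1 := by
  classical
  unfold bas
  rw [lp.norm_single (by norm_num)]
  simp

/-- A vector supported on `F` is the finite sum of its coordinates. -/
lemma eq_sum_bas {V : Type} {F : Finset V} {z : Hs V} (hz : ∀ v ∉ F, z v = 0) :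
    ∑ v ∈ F, z v • bas V v = z := by
  classical
  ext w
  rw [Hs_sum_apply]
  simp only [Hs_smul_apply, bas_apply, mul_ite, mul_one, mul_zero]
  rw [Finset.sum_ite_eq]
  split_ifs with h
  · rfl
  · exact (hz w h).symm

/-- The block `I_j z` of a vector `z` supported on `F`, written as a finite sum. -/
def blk {V : Type} {r : ℕ} (g : V → Fin r) (F : Finset V) (j : Fin r) (z : Hs V) : Hs V :=
  ∑ v ∈ F, (if g v = j then z v else 0) • bas V v

lemma blk_apply {V : Type} {r : ℕ} (g : V → Fin r) {F : Finset V} (j : Fin r) {z : Hs V}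
    (hz : ∀ v ∉ F, z v = 0) (w : V) : blk g F j z w = if g w = j then z w else 0 := by
  classical
  unfold blk
  rw [Hs_sum_apply]
  simp only [Hs_smul_apply, bas_apply, mul_ite, mul_one, mul_zero]
  rw [Finset.sum_ite_eq]
  split_ifs with h h' h'
  · rfl
  · rfl
  · exact (hz w h).symm
  · rfl

lemma sum_blk {V : Type} {r : ℕ} (g : V → Fin r) {F : Finset V} {z : Hs V}
    (hz : ∀ v ∉ F, z v = 0) : ∑ j, blk g F j z = z := by
  ext w
  rw [lp.coeFn_sum, Finset.sum_apply]
  simp [blk_apply g _ hz]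

lemma norm_blk_sq {V : Type} {r : ℕ} (g : V → Fin r) {F : Finset V} (j : Fin r) {z : Hs V}
    (hz : ∀ v ∉ F, z v = 0) :
    ‖blk g F j z‖ ^ 2 = ∑ v ∈ F, if g v = j then ‖z v‖ ^ 2 else 0 := by
  have h : (⟪blk g F j z, blk g F j z⟫).re = ‖blk g F j z‖ ^ 2 :=
    inner_self_eq_norm_sq (𝕜 := ℂ) _
  rw [← h]
  have h2 : ⟪blk g F j z, blk g F j z⟫
      = ⟪blk g F j z, ∑ v ∈ F, (if g v = j then z v else 0) • bas V v⟫ := rfl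
  rw [h2, inner_sum, Complex.re_sum]
  refine Finset.sum_congr rfl fun v _ => ?_
  rw [inner_smul_right, inner_bas, blk_apply g j hz]
  split_ifs
  · have : z v * star (z v) = ((‖z v‖ ^ 2 : ℝ) : ℂ) := by
      rw [Complex.star_def, Complex.mul_conj, Complex.normSq_eq_norm_sq]
    rw [this, Complex.ofReal_re]
  · simp

/-- The finite-rank positive operator `∑ i, |z i⟩⟨z i|`. -/
def rkOp {V ι : Type} [Fintype ι] (z : ι → Hs V) : Hs V →L[ℂ] Hs V :=
  ∑ i, InnerProductSpace.rankOne ℂ (z i) (z i)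

lemma rkOp_apply {V ι : Type} [Fintype ι] (z : ι → Hs V) (x : Hs V) :
    rkOp z x = ∑ i, ⟪z i, x⟫ • z i := by
  simp [rkOp]

lemma rkOp_nonneg {V ι : Type} [Fintype ι] (z : ι → Hs V) (x : Hs V) :
    0 ≤ ⟪x, rkOp z x⟫ := by
  rw [rkOp_apply, inner_sum]
  refine Finset.sum_nonneg fun i _ => ?_
  rw [inner_smul_right, ← inner_conj_symm x (z i), Complex.mul_conj]
  exact_mod_cast Complex.normSq_nonneg _

lemma rkOp_bas {V ι : Type} [Fintype ι] {F : Finset V} {z : ι → Hs V}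
    (hz : ∀ i, ∀ v ∉ F, z i v = 0) (v : V) (hv : v ∉ F) : rkOp z (bas V v) = 0 := by
  rw [rkOp_apply]
  refine Finset.sum_eq_zero fun i _ => ?_
  rw [inner_bas, hz i v hv]
  simp

lemma dPart_rkOp {V ι : Type} [Fintype ι] {r : ℕ} (g : V → Fin r) {F : Finset V} {z : ι → Hs V}
    (hz : ∀ i, ∀ v ∉ F, z i v = 0) (j : Fin r) :
    dPart g (rkOp z) j = ∑ i, ‖blk g F j (z i)‖ ^ 2 := by
  unfold dPart
  rw [tsum_eq_sum (s := F)]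
  · simp_rw [norm_blk_sq g j (hz _)]
    rw [Finset.sum_comm]
    refine Finset.sum_congr rfl fun v _ => ?_
    split_ifs
    · rw [rkOp_apply, inner_sum, Complex.re_sum]
      refine Finset.sum_congr rfl fun i _ => ?_
      rw [inner_smul_right, inner_bas, bas_inner, mul_comm, Complex.star_def, Complex.mul_conj,
        Complex.normSq_eq_norm_sq, Complex.ofReal_re]
    · simp
  · intro v hv
    rw [rkOp_bas hz v hv]
    simp

lemma TT_rkOp {V ι : Type} [Fintype ι] {F : Finset V} {z : ι → Hs V}
    (hz : ∀ i, ∀ v ∉ F, z i v = 0) (b : Hs V →L[ℂ] Hs V) :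
    TT (rkOp z) b = ∑ i, (⟪z i, b (z i)⟫).re := by
  unfold TT
  rw [tsum_eq_sum (s := F)]
  · have h : ∀ i, (⟪z i, b (z i)⟫).re = ∑ v ∈ F, (z i v * ⟪z i, b (bas V v)⟫).re := by
      intro i
      have h2 : b (z i) = b (∑ v ∈ F, z i v • bas V v) := by rw [eq_sum_bas (hz i)]
      rw [h2, map_sum, inner_sum, Complex.re_sum]
      simp_rw [map_smul, inner_smul_right]
    simp_rw [h]
    rw [Finset.sum_comm]
    refine Finset.sum_congr rfl fun v _ => ?_
    rw [rkOp_apply, inner_sum, Complex.re_sum]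
    refine Finset.sum_congr rfl fun i _ => ?_
    rw [inner_smul_right, bas_inner, mul_comm]
  · intro v hv
    rw [bas_inner, rkOp_apply, lp.coeFn_sum, Finset.sum_apply]
    simp [hz _ v hv]

/-- The self-adjoint square root of a positive operator, from the continuous functional calculus. -/
lemma exists_sqrt {E : Type} [NormedAddCommGroup E] [InnerProductSpace ℂ E] [CompleteSpace E]
    (ρ : E →L[ℂ] E) (hρ : ∀ x : E, 0 ≤ ⟪x, ρ x⟫) :
    ∃ σ : E →L[ℂ] E, (∀ x y, ⟪σ x, y⟫ = ⟪x, σ y⟫) ∧ ∀ x, σ (σ x) = ρ x := by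
  have hpos : 0 ≤ ρ := by
    rw [ContinuousLinearMap.nonneg_iff_isPositive, ContinuousLinearMap.isPositive_iff_complex]
    intro x
    obtain ⟨h1, h2⟩ := Complex.le_def.1 (hρ x)
    rw [← inner_conj_symm (ρ x) x]
    refine ⟨Complex.ext (by simp) ?_, ?_⟩
    · rw [Complex.conj_im, ← h2]; simp
    · rw [RCLike.conj_re]; exact h1
  have hs : CFC.sqrt ρ * CFC.sqrt ρ = ρ := CFC.sqrt_mul_sqrt_self ρ hpos
  have hsa : (CFC.sqrt ρ : E →L[ℂ] E).IsPositive := by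
    rw [← ContinuousLinearMap.nonneg_iff_isPositive]
    exact CFC.sqrt_nonneg ρ
  exact ⟨CFC.sqrt ρ, fun x y => hsa.isSymmetric x y, fun x => DFunLike.congr_fun hs x⟩

/-- A positive operator supported on `F` is `∑ |z k⟩⟨z k|` with `z k = √ρ e_k`, `k ∈ F`. -/
lemma exists_eq_rkOp {V : Type} (ρ : Hs V →L[ℂ] Hs V) (hρ : ∀ x : Hs V, 0 ≤ ⟪x, ρ x⟫)
    (F : Finset V) (hsupp : ∀ v ∉ F, ρ (bas V v) = 0) :
    ∃ z : F → Hs V, (∀ i, ∀ v ∉ F, z i v = 0) ∧ ρ = rkOp z := by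
  obtain ⟨σ, hsym, hsq⟩ := exists_sqrt ρ hρ
  have hz0 : ∀ v ∉ F, σ (bas V v) = 0 := by
    intro v hv
    rw [← inner_self_eq_zero (𝕜 := ℂ), hsym, hsq, hsupp v hv, inner_zero_right]
  have hz1 : ∀ x, ∀ v ∉ F, σ x v = 0 := by
    intro x v hv
    rw [← bas_inner, ← hsym, hz0 v hv, inner_zero_left]
  refine ⟨fun k => σ (bas V k), fun i => hz1 _, ?_⟩
  ext1 x
  rw [rkOp_apply, ← hsq]
  conv_lhs => rw [← eq_sum_bas (hz1 x)]
  rw [map_sum, ← Finset.sum_coe_sort F]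
  refine Finset.sum_congr rfl fun k _ => ?_
  rw [map_smul, hsym, bas_inner]

/-- Rescaling the `j`-th block by `s j` changes the trace against `a` by a sum over pairs of blocks;
each pair is controlled by Cauchy–Schwarz over the rank-one components. -/
lemma scale_loss {V ι : Type} [Fintype ι] {r : ℕ} (a : Hs V →L[ℂ] Hs V) (y : ι → Fin r → Hs V)
    (s : Fin r → ℝ) (hs0 : ∀ j, 0 ≤ s j) (hs1 : ∀ j, s j ≤ 1) :
    ∑ k, (⟪∑ i, y k i, a (∑ j, y k j)⟫).re
      - ∑ k, (⟪∑ i, (s i : ℂ) • y k i, a (∑ j, (s j : ℂ) • y k j)⟫).re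
    ≤ ‖a‖ * ∑ i, ∑ j, (1 - s i * s j) * (√(∑ k, ‖y k i‖ ^ 2) * √(∑ k, ‖y k j‖ ^ 2)) := by
  have h1 : ∀ k, (⟪∑ i, y k i, a (∑ j, y k j)⟫).re
      - (⟪∑ i, (s i : ℂ) • y k i, a (∑ j, (s j : ℂ) • y k j)⟫).re
      = ∑ i, ∑ j, (1 - s i * s j) * (⟪y k i, a (y k j)⟫).re := by
    intro k
    simp only [map_sum, sum_inner, inner_sum, Complex.re_sum, map_smul, inner_smul_left,
      inner_smul_right, Complex.conj_ofReal, Complex.re_ofReal_mul, Finset.mul_sum,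
      ← Finset.sum_sub_distrib]
    rw [Finset.sum_comm]
    refine Finset.sum_congr rfl fun i _ => Finset.sum_congr rfl fun j _ => ?_
    ring
  rw [← Finset.sum_sub_distrib]
  simp_rw [h1]
  rw [Finset.sum_comm, Finset.mul_sum]
  refine Finset.sum_le_sum fun i _ => ?_
  rw [Finset.sum_comm, Finset.mul_sum]
  refine Finset.sum_le_sum fun j _ => ?_
  rw [← Finset.mul_sum, mul_left_comm]
  refine mul_le_mul_of_nonneg_left ?_ ?_
  · calc ∑ k, (⟪y k i, a (y k j)⟫).re ≤ ∑ k, ‖a‖ * (‖y k i‖ * ‖y k j‖) := by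
          refine Finset.sum_le_sum fun k _ => ?_
          calc (⟪y k i, a (y k j)⟫).re ≤ ‖y k i‖ * ‖a (y k j)‖ := re_inner_le_norm (𝕜 := ℂ) _ _
            _ ≤ ‖y k i‖ * (‖a‖ * ‖y k j‖) := by gcongr; exact a.le_opNorm _
            _ = _ := by ring
      _ = ‖a‖ * ∑ k, ‖y k i‖ * ‖y k j‖ := by rw [Finset.mul_sum]
      _ ≤ _ := by
          gcongr
          exact Real.sum_mul_le_sqrt_mul_sqrt _ _ _
  · nlinarith [mul_le_one₀ (hs1 i) (hs0 j) (hs1 j)]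

/-- Truncation `x ↦ min x √c` is `1`-Lipschitz; squaring `|u - v| ≤ |x - y|` gives this bound. -/
lemma sqrt_mul_sub_le (c d e : ℝ) (hc : 0 ≤ c) (hd : 0 ≤ d) (he : 0 ≤ e) :
    √d * √e - √(min d c) * √(min e c) ≤ ((d - min d c) + (e - min e c)) / 2 := by
  have h := abs_min_sub_min_le_max √d √c √e √c
  rw [sub_self, abs_zero, max_eq_left (abs_nonneg _), ← sq_le_sq] at h
  have hm : Monotone Real.sqrt := Real.sqrt_monotone
  rw [← hm.map_min, ← hm.map_min] at h
  nlinarith [Real.sq_sqrt hd, Real.sq_sqrt he, Real.sq_sqrt (le_min hd hc),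
    Real.sq_sqrt (le_min he hc)]

/-- Any finitely-supported positive operator can be corrected to a feasible one, losing at most
`2r‖a‖ ∑_j |d_j(ρ) - 1/r|` in objective value. -/
theorem stmt4 (r : ℕ) (hr : 1 ≤ r) (V : Type) [Countable V] [Nonempty V]
    (g : V → Fin r) (hg : ∀ j : Fin r, ∃ v : V, g v = j)
    (a : Hs V →L[ℂ] Hs V) (ha : IsSelfAdjoint a)
    (ρ : Hs V →L[ℂ] Hs V) (hρ : ∀ x : Hs V, 0 ≤ ⟪x, ρ x⟫)
    (F : Finset V) (hsupp : ∀ v ∉ F, ρ (bas V v) = 0) :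
    ∃ (ρ' : Hs V →L[ℂ] Hs V) (F' : Finset V),
      (∀ x : Hs V, 0 ≤ ⟪x, ρ' x⟫) ∧
      (∀ v ∉ F', ρ' (bas V v) = 0) ∧
      (∀ j : Fin r, dPart g ρ' j = 1 / (r : ℝ)) ∧
      TT ρ' a ≥ TT ρ a - 2 * (r : ℝ) * ‖a‖ * ∑ j : Fin r, |dPart g ρ j - 1 / (r : ℝ)| := by
  classical
  obtain ⟨x, hx, rfl⟩ := exists_eq_rkOp ρ hρ F hsupp
  choose w hw using hg
  set c : ℝ := 1 / (r : ℝ) with hc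
  have hc0 : 0 ≤ c := by positivity
  set d : Fin r → ℝ := fun j => ∑ k, ‖blk g F j (x k)‖ ^ 2 with hd
  have hdP : ∀ j, dPart g (rkOp x) j = d j := dPart_rkOp g hx
  have hd0 : ∀ j, 0 ≤ d j := fun j => Finset.sum_nonneg fun _ _ => sq_nonneg _
  -- With `0 / 0 = 0` the factor also behaves correctly on blocks with `d j = 0`.
  set s : Fin r → ℝ := fun j => √(min (d j) c) / √(d j) with hs
  have hs0 : ∀ j, 0 ≤ s j := fun j => by positivity
  have hs1 : ∀ j, s j ≤ 1 := fun j =>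
    div_le_one_of_le₀ (Real.sqrt_le_sqrt (min_le_left _ _)) (Real.sqrt_nonneg _)
  have hsd : ∀ j, s j * √(d j) = √(min (d j) c) := by
    intro j
    rcases eq_or_ne (√(d j)) 0 with h | h
    · have h' : d j = 0 := (Real.sqrt_eq_zero (hd0 j)).1 h
      rw [h, h', min_eq_left hc0]; simp
    · exact div_mul_cancel₀ _ h
  -- The mass missing from block `j` after the rescaling.
  set n : Fin r → ℝ := fun j => c - min (d j) c with hn
  have hn0 : ∀ j, 0 ≤ n j := fun j => sub_nonneg.2 (min_le_right _ _)
  set X : F → Hs V := fun k => ∑ j, (s j : ℂ) • blk g F j (x k) with hX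
  have hXv : ∀ k v, X k v = s (g v) * x k v := by
    intro k v
    rw [hX, Hs_sum_apply]
    simp only [Hs_smul_apply, blk_apply g _ (hx k)]
    simp
  set W : Fin r → Hs V := fun j => ((√(n j) : ℝ) : ℂ) • bas V (w j) with hW
  have hWv : ∀ j v, W j v = if v = w j then ((√(n j) : ℝ) : ℂ) else 0 := by
    intro j v
    rw [hW, Hs_smul_apply, bas_apply, mul_ite, mul_one, mul_zero]
  set F' : Finset V := F ∪ Finset.univ.image w with hF'
  have hXs : ∀ k, ∀ v ∉ F', X k v = 0 := by
    intro k v hv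
    rw [hXv, hx k v (fun h => hv (Finset.mem_union_left _ h)), mul_zero]
  have hWs : ∀ j, ∀ v ∉ F', W j v = 0 := by
    intro j v hv
    rw [hWv, if_neg]
    rintro rfl
    exact hv (Finset.mem_union_right _ (Finset.mem_image_of_mem _ (Finset.mem_univ _)))
  set z : F ⊕ Fin r → Hs V := Sum.elim X W with hz
  have hzs : ∀ i, ∀ v ∉ F', z i v = 0 := by
    rintro (k | j)
    · exact hXs k
    · exact hWs j
  refine ⟨rkOp z, F', rkOp_nonneg z, rkOp_bas hzs, ?_, ?_⟩
  · intro j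
    have hbX : ∀ k, blk g F' j (X k) = (s j : ℂ) • blk g F j (x k) := by
      intro k
      ext v
      rw [blk_apply g j (hXs k), Hs_smul_apply, blk_apply g j (hx k), hXv]
      split_ifs with h
      · rw [h]
      · simp
    have hbW : ∀ i, blk g F' j (W i) = if i = j then W i else 0 := by
      intro i
      ext v
      rw [blk_apply g j (hWs i)]
      by_cases hij : i = j
      · subst hij
        rw [if_pos rfl, hWv]
        by_cases hv : v = w i
        · subst hv; simp [hw]
        · simp [hv]
      · rw [if_neg hij, hWv]
        by_cases hv : v = w i
        · subst hv; simp [hw, hij]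
        · simp [hv]
    have hnW : ‖W j‖ ^ 2 = n j := by
      rw [hW, norm_smul, norm_bas, mul_one, Complex.norm_real, Real.norm_eq_abs, sq_abs,
        Real.sq_sqrt (hn0 j)]
    have e1 : ∑ k, ‖blk g F' j (X k)‖ ^ 2 = min (d j) c := by
      simp_rw [hbX, norm_smul, mul_pow, Complex.norm_real, Real.norm_eq_abs, sq_abs]
      rw [← Finset.mul_sum]
      change s j ^ 2 * d j = _
      conv_lhs => rw [← Real.sq_sqrt (hd0 j)]
      rw [← mul_pow, hsd, Real.sq_sqrt (le_min (hd0 j) hc0)]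
    have e2 : ∑ i, ‖blk g F' j (W i)‖ ^ 2 = n j := by
      rw [Finset.sum_eq_single j]
      · rw [hbW, if_pos rfl, hnW]
      · intro i _ hij
        rw [hbW, if_neg hij]; simp
      · simp
    rw [dPart_rkOp g hzs, Fintype.sum_sum_type]
    simp only [hz, Sum.elim_inl, Sum.elim_inr]
    rw [e1, e2]
    simp [hn]
  · rw [TT_rkOp hzs, TT_rkOp hx, Fintype.sum_sum_type]
    simp only [hz, Sum.elim_inl, Sum.elim_inr, hdP]
    have hloss := scale_loss a (fun k j => blk g F j (x k)) s hs0 hs1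
    simp only [sum_blk g (hx _)] at hloss
    change _ - ∑ k, (⟪X k, a (X k)⟫).re ≤ ‖a‖ * ∑ i, ∑ j, (1 - s i * s j) * (√(d i) * √(d j))
      at hloss
    have hb : ∑ i, ∑ j, (1 - s i * s j) * (√(d i) * √(d j))
        ≤ r * ∑ j, (d j - min (d j) c) := by
      calc ∑ i, ∑ j, (1 - s i * s j) * (√(d i) * √(d j))
          ≤ ∑ i, ∑ j, ((d i - min (d i) c) + (d j - min (d j) c)) / 2 := by
            refine Finset.sum_le_sum fun i _ => Finset.sum_le_sum fun j _ => ?_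
            refine le_trans (le_of_eq ?_) (sqrt_mul_sub_le c (d i) (d j) hc0 (hd0 i) (hd0 j))
            rw [← hsd i, ← hsd j]; ring
        _ = r * ∑ j, (d j - min (d j) c) := by
            simp_rw [← Finset.sum_div, Finset.sum_add_distrib, Finset.sum_const,
              Finset.card_univ, Fintype.card_fin, nsmul_eq_mul, ← Finset.mul_sum]
            ring
    have hWl : -(‖a‖ * ∑ j, n j) ≤ ∑ j, (⟪W j, a (W j)⟫).re := by
      rw [Finset.mul_sum, ← Finset.sum_neg_distrib]
      refine Finset.sum_le_sum fun j _ => ?_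
      have h1 : |(⟪W j, a (W j)⟫).re| ≤ ‖W j‖ * ‖a (W j)‖ :=
        (Complex.abs_re_le_norm _).trans (norm_inner_le_norm _ _)
      have h2 : ‖W j‖ * ‖a (W j)‖ ≤ ‖a‖ * ‖W j‖ ^ 2 := by
        nlinarith [a.le_opNorm (W j), norm_nonneg (W j)]
      have h3 : ‖W j‖ ^ 2 = n j := by
        rw [hW, norm_smul, norm_bas, mul_one, Complex.norm_real, Real.norm_eq_abs, sq_abs,
          Real.sq_sqrt (hn0 j)]
      rw [h3] at h2
      linarith [neg_abs_le (⟪W j, a (W j)⟫).re]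
    have hr1 : (1 : ℝ) ≤ r := by exact_mod_cast hr
    have hfin : r * ∑ j, (d j - min (d j) c) + ∑ j, n j ≤ 2 * r * ∑ j, |d j - c| := by
      rw [Finset.mul_sum, Finset.mul_sum, ← Finset.sum_add_distrib]
      refine Finset.sum_le_sum fun j _ => ?_
      simp only [hn]
      rcases le_total (d j) c with h | h
      · rw [min_eq_left h, abs_of_nonpos (sub_nonpos.2 h)]
        nlinarith
      · rw [min_eq_right h, abs_of_nonneg (sub_nonneg.2 h)]
        nlinarith
    have h1 := mul_le_mul_of_nonneg_left hb (norm_nonneg a)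
    have h2 := mul_le_mul_of_nonneg_left hfin (norm_nonneg a)
    linarith
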